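/- Let r = 1 + 1/3^{k+1}. Then for every l ≥ 1, every I ∈ ℐ_l, and every x ∈ I^Δ, one has M_r w_k(x) ≤ 21·w_k(x), where w_k(x) = Σ_{l=1}^∞ (3^k/(3^{k−1}+1))^l · χ_{Ω_l}(x). -/

import Mathlib

open MeasureTheory Set Filter Topology
open scoped ENNReal

noncomputable section

namespace RT

/-- The Hilbert transform `Hf(x)`, defined as the principal-value limit
`lim_{ε→0⁺} ∫_{|x-y|>ε} f(y)/(x-y) dy` (junk value at points where the limit
does not exist). -/
def Hil (f : ℝ → ℝ) (x : ℝ) : ℝ :=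
  limUnder (𝓝[>] (0 : ℝ)) fun ε => ∫ y in {y : ℝ | ε < |x - y|}, f y / (x - y)

/-- The (uncentered) Hardy–Littlewood maximal function over bounded intervals:
`Mf(x) = sup_{I ∋ x} (1/|I|) ∫_I |f|`. -/
def HLMax (f : ℝ → ℝ) (x : ℝ) : ℝ≥0∞ :=
  ⨆ (a : ℝ) (b : ℝ) (_ : a < b) (_ : x ∈ Icc a b),
    (ENNReal.ofReal (b - a))⁻¹ * ∫⁻ y in Ioo a b, ENNReal.ofReal |f y|

/-- `M_r f = (M(|f|^r))^{1/r}`. -/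
def Mr (r : ℝ) (f : ℝ → ℝ) (x : ℝ) : ℝ≥0∞ :=
  HLMax (fun y => |f y| ^ r) x ^ (1 / r)

/-- The Orlicz maximal operator
`M_Φ f(x) = sup_{I ∋ x} inf {λ > 0 : (1/|I|) ∫_I Φ(|f|/λ) ≤ 1}`. -/
def MOrlicz (Φ : ℝ → ℝ) (f : ℝ → ℝ) (x : ℝ) : ℝ≥0∞ :=
  ⨆ (a : ℝ) (b : ℝ) (_ : a < b) (_ : x ∈ Icc a b),
    sInf {lam : ℝ≥0∞ | ∃ l : ℝ, 0 < l ∧ lam = ENNReal.ofReal l ∧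
      (∫⁻ y in Ioo a b, ENNReal.ofReal (Φ (|f y| / l))) ≤ ENNReal.ofReal (b - a)}

/-- The centered maximal operator with respect to a weight `v`:
`M^c_v h(x) = sup_{ρ>0} (1/v(B(x,ρ))) ∫_{B(x,ρ)} |h| v`. -/
def Mc (v h : ℝ → ℝ) (x : ℝ) : ℝ≥0∞ :=
  ⨆ (ρ : ℝ) (_ : 0 < ρ),
    (∫⁻ y in Ioo (x - ρ) (x + ρ), ENNReal.ofReal (v y))⁻¹ *
      ∫⁻ y in Ioo (x - ρ) (x + ρ), ENNReal.ofReal |h y| * ENNReal.ofReal (v y)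

/-- A Young function: convex, increasing, `Φ(0) = 0`, `Φ(t)/t → ∞`. -/
structure IsYoung (Φ : ℝ → ℝ) : Prop where
  convexOn : ConvexOn ℝ (Ici 0) Φ
  mono : MonotoneOn Φ (Ici 0)
  map_zero : Φ 0 = 0
  superlinear : Tendsto (fun t => Φ t / t) atTop atTop

/-- A weight: a nonnegative locally integrable function on `ℝ`. -/
def IsWeight (w : ℝ → ℝ) : Prop :=
  (∀ x, 0 ≤ w x) ∧ LocallyIntegrable w volume

/-! Triadic machinery: intervals are represented by their endpoint pairs,
`(a, b)` corresponding to `[a, b)`. -/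

/-- The length of the interval. -/
def len (I : ℝ × ℝ) : ℝ := I.2 - I.1

/-- The set `[a, b)` of the interval `I = (a, b)`. -/
def ivl (I : ℝ × ℝ) : Set ℝ := Ico I.1 I.2

/-- A triadic interval `[3^j n, 3^j (n+1))`, `j, n ∈ ℤ`. -/
def IsTriadic (I : ℝ × ℝ) : Prop :=
  ∃ j n : ℤ, I.1 = (3 : ℝ) ^ j * n ∧ I.2 = (3 : ℝ) ^ j * (n + 1)

/-- The middle third `I^Δ` of `I`: same center, one third of the length. -/
def mid (I : ℝ × ℝ) : ℝ × ℝ := (I.1 + (I.2 - I.1) / 3, I.2 - (I.2 - I.1) / 3)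

/-- `P` assigns to each triadic interval `J ⊆ [0,1)` a triadic interval
adjacent to `J^Δ` (on its left or on its right) with `|P J| = 3^{-k} |J|`. -/
def GoodP (k : ℕ) (P : ℝ × ℝ → ℝ × ℝ) : Prop :=
  ∀ J : ℝ × ℝ, IsTriadic J → ivl J ⊆ Ico (0 : ℝ) 1 →
    IsTriadic (P J) ∧ len (P J) = len J / 3 ^ k ∧
      ((P J).2 = (mid J).1 ∨ (P J).1 = (mid J).2)

/-- The families `𝒥_l`: `𝒥_1 = {[0,1)}`, and `𝒥_{l+1}` consists of the `3^{k-1}`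
triadic subintervals of `J^Δ` of length `|J|/3^k`, for each `J ∈ 𝒥_l`.
(`𝒥_0` is empty.) -/
def Jfam (k : ℕ) : ℕ → Set (ℝ × ℝ)
  | 0 => ∅
  | 1 => {((0 : ℝ), (1 : ℝ))}
  | l + 2 => {J' | IsTriadic J' ∧ ∃ J ∈ Jfam k (l + 1),
      len J' = len J / 3 ^ k ∧ ivl J' ⊆ ivl (mid J)}

/-- The families `ℐ_l = {P J : J ∈ 𝒥_l}`. -/
def Ifam (k : ℕ) (P : ℝ × ℝ → ℝ × ℝ) (l : ℕ) : Set (ℝ × ℝ) :=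
  P '' Jfam k l

/-- `Ω_l = ⋃_{I ∈ ℐ_l} I`. -/
def Omega (k : ℕ) (P : ℝ × ℝ → ℝ × ℝ) (l : ℕ) : Set ℝ :=
  ⋃ I ∈ Ifam k P l, ivl I

/-- The constant `3^k / (3^{k-1} + 1)`. -/
def alpha (k : ℕ) : ℝ := 3 ^ k / (3 ^ (k - 1) + 1)

/-- The Reguera–Thiele weight
`w_k = ∑_{l=1}^∞ (3^k/(3^{k-1}+1))^l χ_{Ω_l}`. -/
def wk (k : ℕ) (P : ℝ × ℝ → ℝ × ℝ) (x : ℝ) : ℝ :=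
  ∑' l : ℕ, alpha k ^ (l + 1) * (Omega k P (l + 1)).indicator (fun _ => (1 : ℝ)) x

/-! A point `x` of the middle third of `I = P J`, `J ∈ 𝒥_l`, only sees intervals of two kinds.
A short one stays inside `I`, where `w_k` is constant. A long one has length comparable to `|I|`,
which is the common length of the members of `𝒥_{l+1}`: the part of `w_k` living on
`Ω_1 ∪ ⋯ ∪ Ω_l` is at most `w_k x`, and the sets `Ω_{l+1+i}` have density `3^{-(k+i)}` in the
members of `𝒥_{l+1}`, since each generation passes to middle thirds. With `α = 3^k/(3^{k-1}+1)`
the contributions `α^{r(l+1+i)} 3^{-(k+i)}` form a geometric series of ratio `α^r/3`. Already for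
`r = 1` this ratio is `1 - 1/(3^{k-1}+1)`, so that `r - 1` has to be of order `3^{-k}`. -/

section MaximalFunction

variable {f : ℝ → ℝ} {x : ℝ}

lemma HLMax_le_of_lintegral_le {C : ℝ≥0∞}
    (h : ∀ a b, a < b → x ∈ Icc a b →
      ∫⁻ y in Ioo a b, ENNReal.ofReal |f y| ≤ C * ENNReal.ofReal (b - a)) :
    HLMax f x ≤ C := by
  refine iSup₂_le fun a b => iSup₂_le fun hab hx => ?_
  rw [mul_comm, ← div_eq_mul_inv]
  exact ENNReal.div_le_of_le_mul (h a b hab hx)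

lemma Mr_le_of_lintegral_le {r C A : ℝ} (hr : 1 ≤ r) (hC : 1 ≤ C) (hA : 0 ≤ A)
    (h : ∀ a b, a < b → x ∈ Icc a b →
      ∫⁻ y in Ioo a b, ENNReal.ofReal (|f y| ^ r) ≤ ENNReal.ofReal (C * A ^ r * (b - a))) :
    Mr r f x ≤ ENNReal.ofReal (C * A) := by
  have hM : HLMax (fun y => |f y| ^ r) x ≤ ENNReal.ofReal (C * A ^ r) := by
    refine HLMax_le_of_lintegral_le fun a b hab hx => ?_
    simpa only [abs_of_nonneg (Real.rpow_nonneg (abs_nonneg _) r),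
      ← ENNReal.ofReal_mul (show 0 ≤ C * A ^ r by positivity)] using h a b hab hx
  calc Mr r f x
      ≤ ENNReal.ofReal (C * A ^ r) ^ (1 / r) := ENNReal.rpow_le_rpow hM (by positivity)
    _ = ENNReal.ofReal (C ^ (1 / r) * A) := by
        rw [ENNReal.ofReal_rpow_of_nonneg (by positivity) (by positivity),
          Real.mul_rpow (by positivity) (by positivity), ← Real.rpow_mul hA,
          mul_one_div_cancel (by positivity), Real.rpow_one]
    _ ≤ ENNReal.ofReal (C * A) := by
        gcongr
        exact Real.rpow_le_self_of_one_le hC (div_le_one_of_le₀ hr (by positivity))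

end MaximalFunction

section Triadic

variable {I J : ℝ × ℝ} {x : ℝ}

lemma volume_ivl (I : ℝ × ℝ) : volume (ivl I) = ENNReal.ofReal (len I) := Real.volume_Ico

lemma len_mid (I : ℝ × ℝ) : len (mid I) = len I / 3 := by
  simp only [len, mid]; ring

lemma ivl_mid_subset (I : ℝ × ℝ) : ivl (mid I) ⊆ ivl I := by
  intro x hx
  simp only [ivl, mid, mem_Ico] at *
  constructor <;> linarith

lemma Ioo_subset_ivl_of_mem_mid {a b : ℝ} (hx : x ∈ ivl (mid I)) (hxab : x ∈ Icc a b)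
    (hab : b - a < len I / 3) : Ioo a b ⊆ ivl I := by
  rintro y ⟨hay, hyb⟩
  simp only [ivl, mid, len, mem_Ico, mem_Icc] at *
  constructor <;> linarith

lemma countable_setOf_isTriadic : {I : ℝ × ℝ | IsTriadic I}.Countable := by
  refine (countable_range fun p : ℤ × ℤ =>
    ((3 : ℝ) ^ p.1 * p.2, (3 : ℝ) ^ p.1 * (p.2 + 1))).mono ?_
  rintro I ⟨j, n, h₁, h₂⟩
  exact ⟨(j, n), Prod.ext h₁.symm h₂.symm⟩

lemma IsTriadic.eq_of_mem (hI : IsTriadic I) (hJ : IsTriadic J) (hlen : len I = len J)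
    (hxI : x ∈ ivl I) (hxJ : x ∈ ivl J) : I = J := by
  have eq_floor {K : ℝ × ℝ} (hK : IsTriadic K) (hx : x ∈ ivl K) :
      K = (len K * ⌊x / len K⌋, len K * (⌊x / len K⌋ + 1)) := by
    obtain ⟨j, n, h₁, h₂⟩ := hK
    have hlenK : len K = 3 ^ j := by rw [len, h₁, h₂]; ring
    have hpos : (0 : ℝ) < 3 ^ j := by positivity
    have hfloor : ⌊x / 3 ^ j⌋ = n := by
      rw [Int.floor_eq_iff, le_div_iff₀ hpos, div_lt_iff₀ hpos, mul_comm, ← h₁, mul_comm, ← h₂]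
      exact hx
    rw [hlenK, hfloor]
    exact Prod.ext h₁ h₂
  rw [eq_floor hI hxI, eq_floor hJ hxJ, hlen]

end Triadic

section Families

variable {k l : ℕ} {P : ℝ × ℝ → ℝ × ℝ} {J J' : ℝ × ℝ} {x : ℝ}

lemma isTriadic_of_mem_Jfam (hJ : J ∈ Jfam k l) : IsTriadic J := by
  match l, hJ with
  | 1, hJ =>
    obtain rfl : J = (0, 1) := hJ
    exact ⟨0, 0, by simp, by simp⟩
  | _ + 2, hJ => exact hJ.1

lemma ivl_subset_of_mem_Jfam (hJ : J ∈ Jfam k (l + 1)) : ivl J ⊆ Ico 0 1 := by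
  induction l generalizing J with
  | zero =>
    obtain rfl : J = (0, 1) := hJ
    exact subset_rfl
  | succ l ih =>
    obtain ⟨-, J', hJ', -, hsub⟩ := hJ
    exact hsub.trans ((ivl_mid_subset J').trans (ih hJ'))

lemma len_of_mem_Jfam (hJ : J ∈ Jfam k (l + 1)) : len J = (3 ^ (k * l))⁻¹ := by
  induction l generalizing J with
  | zero =>
    obtain rfl : J = (0, 1) := hJ
    simp [len]
  | succ l ih =>
    obtain ⟨-, J', hJ', hlen, -⟩ := hJ
    rw [hlen, ih hJ', mul_add_one, pow_add, mul_inv, div_eq_mul_inv]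

lemma eq_of_mem_Jfam (hJ : J ∈ Jfam k (l + 1)) (hJ' : J' ∈ Jfam k (l + 1))
    (hx : x ∈ ivl J) (hx' : x ∈ ivl J') : J = J' :=
  (isTriadic_of_mem_Jfam hJ).eq_of_mem (isTriadic_of_mem_Jfam hJ')
    ((len_of_mem_Jfam hJ).trans (len_of_mem_Jfam hJ').symm) hx hx'

lemma pairwiseDisjoint_Jfam (k l : ℕ) : (Jfam k (l + 1)).PairwiseDisjoint ivl :=
  fun _ hJ _ hJ' hne => disjoint_left.2 fun _ hx hx' => hne (eq_of_mem_Jfam hJ hJ' hx hx')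

lemma countable_Jfam (k l : ℕ) : (Jfam k l).Countable :=
  countable_setOf_isTriadic.mono fun _ => isTriadic_of_mem_Jfam

lemma GoodP.len_eq (hP : GoodP k P) (hJ : J ∈ Jfam k (l + 1)) : len (P J) = len J / 3 ^ k :=
  (hP J (isTriadic_of_mem_Jfam hJ) (ivl_subset_of_mem_Jfam hJ)).2.1

lemma GoodP.adjacent_mid (hP : GoodP k P) (hJ : J ∈ Jfam k (l + 1)) :
    (P J).2 = (mid J).1 ∨ (P J).1 = (mid J).2 :=
  (hP J (isTriadic_of_mem_Jfam hJ) (ivl_subset_of_mem_Jfam hJ)).2.2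

lemma GoodP.ivl_subset (hk : 1 ≤ k) (hP : GoodP k P) (hJ : J ∈ Jfam k (l + 1)) :
    ivl (P J) ⊆ ivl J := by
  have hpos : 0 ≤ len J := by rw [len_of_mem_Jfam hJ]; positivity
  have hle : len (P J) ≤ len J / 3 := by
    rw [hP.len_eq hJ]
    gcongr
    exact le_self_pow₀ (by norm_num) (by omega)
  intro x hx
  have hadj := hP.adjacent_mid hJ
  simp only [len, mid, ivl, mem_Ico] at *
  rcases hadj with hadj | hadj <;> constructor <;> linarith

lemma GoodP.disjoint_mid (hP : GoodP k P) (hJ : J ∈ Jfam k (l + 1)) :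
    Disjoint (ivl (P J)) (ivl (mid J)) := by
  rcases hP.adjacent_mid hJ with hadj | hadj
  · exact Ico_disjoint_Ico.2 ((min_le_left _ _).trans (hadj.le.trans (le_max_right _ _)))
  · exact Ico_disjoint_Ico.2 ((min_le_right _ _).trans (hadj.ge.trans (le_max_left _ _)))

lemma mem_Omega : x ∈ Omega k P l ↔ ∃ J ∈ Jfam k l, x ∈ ivl (P J) := by
  simp only [Omega, Ifam, mem_iUnion, mem_image, exists_prop, exists_exists_and_eq_and]

lemma measurableSet_Omega (k : ℕ) (P : ℝ × ℝ → ℝ × ℝ) (l : ℕ) : MeasurableSet (Omega k P l) :=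
  .biUnion ((countable_Jfam k l).image P) fun _ _ => measurableSet_Ico

/-- The union of the family `𝒥_{l+1}`. The index is shifted so that these sets decrease from
`l = 0` on, `𝒥_0` being empty. -/
def Junion (k l : ℕ) : Set ℝ :=
  ⋃ J ∈ Jfam k (l + 1), ivl J

lemma antitone_Junion (k : ℕ) : Antitone (Junion k) := by
  refine antitone_nat_of_succ_le fun l => iUnion₂_subset fun J hJ => ?_
  obtain ⟨-, J', hJ', -, hsub⟩ := hJ
  exact (hsub.trans (ivl_mid_subset J')).trans (subset_biUnion_of_mem (u := ivl) hJ')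

lemma Omega_subset_Junion (hk : 1 ≤ k) (hP : GoodP k P) (l : ℕ) :
    Omega k P (l + 1) ⊆ Junion k l := by
  intro x hx
  obtain ⟨J, hJ, hxJ⟩ := mem_Omega.1 hx
  exact mem_biUnion hJ (hP.ivl_subset hk hJ hxJ)

lemma exists_child_of_mem_Junion (hJ : J ∈ Jfam k (l + 1)) (hxJ : x ∈ ivl J)
    (hx : x ∈ Junion k (l + 1)) :
    ∃ J' ∈ Jfam k (l + 2), ivl J' ⊆ ivl (mid J) ∧ x ∈ ivl J' := by
  obtain ⟨J', hJ', hxJ'⟩ := mem_iUnion₂.1 hx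
  obtain ⟨-, K, hK, -, hsub⟩ := id hJ'
  obtain rfl := eq_of_mem_Jfam hJ hK hxJ (ivl_mid_subset K (hsub hxJ'))
  exact ⟨J', hJ', hsub, hxJ'⟩

lemma disjoint_Omega_Junion (hk : 1 ≤ k) (hP : GoodP k P) (l : ℕ) :
    Disjoint (Omega k P (l + 1)) (Junion k (l + 1)) := by
  refine disjoint_left.2 fun x hx hx' => ?_
  obtain ⟨J, hJ, hxP⟩ := mem_Omega.1 hx
  obtain ⟨J', -, hsub, hxJ'⟩ := exists_child_of_mem_Junion hJ (hP.ivl_subset hk hJ hxP) hx'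
  exact disjoint_left.1 (hP.disjoint_mid hJ) hxP (hsub hxJ')

lemma pairwise_disjoint_Omega (hk : 1 ≤ k) (hP : GoodP k P) :
    Pairwise (Function.onFun Disjoint fun l => Omega k P (l + 1)) :=
  (pairwise_disjoint_on _).2 fun l m hlm =>
    (disjoint_Omega_Junion hk hP l).mono_right
      ((Omega_subset_Junion hk hP m).trans (antitone_Junion k hlm))

end Families

section Weight

variable {k l : ℕ} {P : ℝ × ℝ → ℝ × ℝ} {x r : ℝ}

lemma alpha_nonneg (k : ℕ) : 0 ≤ alpha k := by
  unfold alpha; positivity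

lemma one_le_alpha (hk : 1 ≤ k) : 1 ≤ alpha k := by
  have hpow : (3 : ℝ) ^ (k - 1) * 3 = 3 ^ k := pow_sub_one_mul (by omega) 3
  have hone : (1 : ℝ) ≤ 3 ^ (k - 1) := one_le_pow₀ (by norm_num)
  rw [alpha, le_div_iff₀ (by positivity)]
  linarith

lemma wk_nonneg (k : ℕ) (P : ℝ × ℝ → ℝ × ℝ) (x : ℝ) : 0 ≤ wk k P x :=
  tsum_nonneg fun _ => mul_nonneg (pow_nonneg (alpha_nonneg k) _)
    (indicator_nonneg (fun _ _ => zero_le_one) x)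

lemma wk_of_mem_Omega (hk : 1 ≤ k) (hP : GoodP k P) (hx : x ∈ Omega k P (l + 1)) :
    wk k P x = alpha k ^ (l + 1) := by
  have hother (m : ℕ) (hm : m ≠ l) : x ∉ Omega k P (m + 1) :=
    disjoint_right.1 (pairwise_disjoint_Omega hk hP hm) hx
  rw [wk, tsum_eq_single l fun m hm => by simp [hother m hm]]
  simp [hx]

lemma wk_le_of_notMem_Omega (hk : 1 ≤ k) (hP : GoodP k P)
    (hx : ∀ i, x ∉ Omega k P (l + i + 1)) : wk k P x ≤ alpha k ^ l := by
  by_cases h : ∃ m, x ∈ Omega k P (m + 1)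
  · obtain ⟨m, hm⟩ := h
    rw [wk_of_mem_Omega hk hP hm]
    refine pow_le_pow_right₀ (one_le_alpha hk) (Nat.succ_le_of_lt (not_le.1 fun hlm => ?_))
    obtain ⟨i, rfl⟩ := Nat.exists_eq_add_of_le hlm
    exact hx i hm
  · push Not at h
    have hzero : wk k P x = 0 := by simp [wk, h]
    exact hzero.trans_le (pow_nonneg (alpha_nonneg k) l)

lemma ofReal_wk_rpow_le (hk : 1 ≤ k) (hP : GoodP k P) (hr : 0 ≤ r) (l : ℕ) (x : ℝ) :
    ENNReal.ofReal (wk k P x ^ r) ≤ ENNReal.ofReal ((alpha k ^ r) ^ l) +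
      ∑' i : ℕ, (Omega k P (l + i + 1)).indicator
        (fun _ => ENNReal.ofReal ((alpha k ^ r) ^ (l + i + 1))) x := by
  simp only [Real.rpow_pow_comm (alpha_nonneg k)]
  by_cases h : ∃ i, x ∈ Omega k P (l + i + 1)
  · obtain ⟨i, hi⟩ := h
    refine (le_of_eq ?_).trans ((ENNReal.le_tsum i).trans le_add_self)
    rw [indicator_of_mem hi, wk_of_mem_Omega hk hP hi]
  · push Not at h
    refine le_add_right (ENNReal.ofReal_le_ofReal ?_)
    exact Real.rpow_le_rpow (wk_nonneg k P x) (wk_le_of_notMem_Omega hk hP h) hr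

end Weight

section Density

lemma measure_inter_biUnion_le_mul {α ι : Type*} [MeasurableSpace α] {μ : Measure α} {t : Set ι}
    {A : ι → Set α} {S : Set α} {c : ℝ≥0∞} (ht : t.Countable) (hdisj : t.PairwiseDisjoint A)
    (hA : ∀ i ∈ t, MeasurableSet (A i)) (h : ∀ i ∈ t, μ (S ∩ A i) ≤ c * μ (A i)) :
    μ (S ∩ ⋃ i ∈ t, A i) ≤ c * μ (⋃ i ∈ t, A i) := by
  calc μ (S ∩ ⋃ i ∈ t, A i)
      ≤ ∑' i : t, μ (S ∩ A i) := by
        rw [inter_iUnion₂]; exact measure_biUnion_le μ ht _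
    _ ≤ ∑' i : t, c * μ (A i) := ENNReal.tsum_le_tsum fun i => h i i.2
    _ = c * μ (⋃ i ∈ t, A i) := by
        rw [ENNReal.tsum_mul_left, measure_biUnion ht hdisj hA]

variable {k l : ℕ} {P : ℝ × ℝ → ℝ × ℝ} {J : ℝ × ℝ}

lemma volume_Omega_inter_biUnion_le {S : Set (ℝ × ℝ)} (hS : S ⊆ Jfam k (l + 1)) {m : ℕ}
    {c : ℝ≥0∞} (h : ∀ J ∈ S, volume (Omega k P m ∩ ivl J) ≤ c * volume (ivl J)) :
    volume (Omega k P m ∩ ⋃ J ∈ S, ivl J) ≤ c * volume (⋃ J ∈ S, ivl J) :=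
  measure_inter_biUnion_le_mul ((countable_Jfam k _).mono hS)
    ((pairwiseDisjoint_Jfam k l).subset hS) (fun _ _ => measurableSet_Ico) h

lemma Omega_inter_ivl_subset (hk : 1 ≤ k) (hP : GoodP k P) (hJ : J ∈ Jfam k (l + 1)) :
    Omega k P (l + 1) ∩ ivl J ⊆ ivl (P J) := by
  rintro x ⟨hx, hxJ⟩
  obtain ⟨J', hJ', hxP⟩ := mem_Omega.1 hx
  rwa [eq_of_mem_Jfam hJ hJ' hxJ (hP.ivl_subset hk hJ' hxP)]

lemma volume_Omega_inter_ivl_le (hk : 1 ≤ k) (hP : GoodP k P) (i : ℕ)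
    (hJ : J ∈ Jfam k (l + 1)) :
    volume (Omega k P (l + i + 1) ∩ ivl J) ≤
      ENNReal.ofReal ((1 / 3) ^ (k + i)) * volume (ivl J) := by
  induction i generalizing l J with
  | zero =>
    refine (measure_mono (Omega_inter_ivl_subset hk hP hJ)).trans_eq ?_
    rw [volume_ivl, volume_ivl, hP.len_eq hJ, ← ENNReal.ofReal_mul (by positivity),
      add_zero, one_div_pow, div_eq_inv_mul, one_div]
  | succ i ih =>
    let children : Set (ℝ × ℝ) := {J' ∈ Jfam k (l + 2) | ivl J' ⊆ ivl (mid J)}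
    have hindex : l + (i + 1) + 1 = l + 1 + i + 1 := by ring
    have hcover : Omega k P (l + (i + 1) + 1) ∩ ivl J ⊆
        Omega k P (l + 1 + i + 1) ∩ ⋃ J' ∈ children, ivl J' := by
      rintro x ⟨hx, hxJ⟩
      rw [hindex] at hx
      have hxU : x ∈ Junion k (l + 1) :=
        antitone_Junion k (Nat.le_add_right _ i) (Omega_subset_Junion hk hP _ hx)
      obtain ⟨J', hJ', hsub, hxJ'⟩ := exists_child_of_mem_Junion hJ hxJ hxU
      exact ⟨hx, mem_biUnion (x := J') ⟨hJ', hsub⟩ hxJ'⟩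
    calc volume (Omega k P (l + (i + 1) + 1) ∩ ivl J)
        ≤ volume (Omega k P (l + 1 + i + 1) ∩ ⋃ J' ∈ children, ivl J') := measure_mono hcover
      _ ≤ ENNReal.ofReal ((1 / 3) ^ (k + i)) * volume (⋃ J' ∈ children, ivl J') :=
          volume_Omega_inter_biUnion_le (sep_subset _ _) fun J' hJ' => ih hJ'.1
      _ ≤ ENNReal.ofReal ((1 / 3) ^ (k + i)) * volume (ivl (mid J)) := by
          gcongr
          exact iUnion₂_subset fun J' hJ' => hJ'.2
      _ = ENNReal.ofReal ((1 / 3) ^ (k + (i + 1))) * volume (ivl J) := by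
          rw [volume_ivl, volume_ivl, len_mid, ← ENNReal.ofReal_mul (by positivity),
            ← ENNReal.ofReal_mul (by positivity)]
          ring_nf

lemma volume_Omega_inter_Ioo_le (hk : 1 ≤ k) (hP : GoodP k P) (l i : ℕ) (a b : ℝ) :
    volume (Omega k P (l + i + 1) ∩ Ioo a b) ≤
      ENNReal.ofReal ((1 / 3) ^ (k + i)) *
        ENNReal.ofReal (b - a + 2 * (3 ^ (k * l))⁻¹) := by
  let meeting : Set (ℝ × ℝ) := {J ∈ Jfam k (l + 1) | (ivl J ∩ Ioo a b).Nonempty}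
  have hcover : Omega k P (l + i + 1) ∩ Ioo a b ⊆
      Omega k P (l + i + 1) ∩ ⋃ J ∈ meeting, ivl J := by
    rintro x ⟨hx, hxab⟩
    obtain ⟨J, hJ, hxJ⟩ := mem_iUnion₂.1
      (antitone_Junion k (Nat.le_add_right l i) (Omega_subset_Junion hk hP _ hx))
    exact ⟨hx, mem_biUnion (x := J) ⟨hJ, x, hxJ, hxab⟩ hxJ⟩
  have hunion : ⋃ J ∈ meeting, ivl J ⊆ Ioo (a - (3 ^ (k * l))⁻¹) (b + (3 ^ (k * l))⁻¹) := by
    refine iUnion₂_subset fun J hJ x hx => ?_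
    obtain ⟨hJ, y, hy, hyab⟩ := hJ
    have hlen := len_of_mem_Jfam hJ
    simp only [len, ivl, mem_Ico, mem_Ioo] at *
    constructor <;> linarith
  calc volume (Omega k P (l + i + 1) ∩ Ioo a b)
      ≤ volume (Omega k P (l + i + 1) ∩ ⋃ J ∈ meeting, ivl J) := measure_mono hcover
    _ ≤ ENNReal.ofReal ((1 / 3) ^ (k + i)) * volume (⋃ J ∈ meeting, ivl J) :=
        volume_Omega_inter_biUnion_le (sep_subset _ _)
          fun J hJ => volume_Omega_inter_ivl_le hk hP i hJ.1
    _ ≤ ENNReal.ofReal ((1 / 3) ^ (k + i)) *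
          volume (Ioo (a - (3 ^ (k * l))⁻¹) (b + (3 ^ (k * l))⁻¹)) := by gcongr
    _ = _ := by rw [Real.volume_Ioo]; ring_nf

end Density

section Series

variable {k : ℕ} {r : ℝ}

lemma alpha_le_three (k : ℕ) : alpha k ≤ 3 := by
  have hpow : (3 : ℝ) ^ k ≤ 3 ^ (k - 1) * 3 := by
    rw [← pow_succ]
    exact pow_le_pow_right₀ (by norm_num) (by omega)
  rw [alpha, div_le_iff₀ (by positivity)]
  linarith

lemma alpha_rpow_sub_one_le (hk : 1 ≤ k) (hr : 1 ≤ r) (hr' : r ≤ 1 + 1 / 3 ^ (k + 1)) :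
    alpha k ^ (r - 1) ≤ 1 + 2 / 3 ^ (k + 1) := by
  have hα := one_le_alpha hk
  have hp : r - 1 ≤ 1 / 3 ^ (k + 1) := by linarith
  have hp_one : (1 : ℝ) / 3 ^ (k + 1) ≤ 1 :=
    div_le_one_of_le₀ (one_le_pow₀ (by norm_num)) (by positivity)
  calc alpha k ^ (r - 1) = (1 + (alpha k - 1)) ^ (r - 1) := by rw [add_sub_cancel]
    _ ≤ 1 + (r - 1) * (alpha k - 1) :=
        rpow_one_add_le_one_add_mul_self (by linarith) (by linarith) (hp.trans hp_one)
    _ ≤ 1 + 1 / 3 ^ (k + 1) * 2 := by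
        gcongr
        linarith [alpha_le_three k]
    _ = 1 + 2 / 3 ^ (k + 1) := by ring

lemma alpha_rpow_div_three_le (hk : 1 ≤ k) (hr : 1 ≤ r) (hr' : r ≤ 1 + 1 / 3 ^ (k + 1)) :
    alpha k ^ r / 3 ≤ 1 - 7 / (9 * (3 ^ (k - 1) + 1)) := by
  have hα : 0 < alpha k := zero_lt_one.trans_le (one_le_alpha hk)
  calc alpha k ^ r / 3 = alpha k * alpha k ^ (r - 1) / 3 := by
        rw [Real.rpow_sub_one hα.ne', mul_div_cancel₀ _ hα.ne']
    _ ≤ alpha k * (1 + 2 / 3 ^ (k + 1)) / 3 := by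
        gcongr
        exact alpha_rpow_sub_one_le hk hr hr'
    _ = 1 - 7 / (9 * (3 ^ (k - 1) + 1)) := by
        obtain ⟨q, rfl⟩ := Nat.exists_eq_add_of_le' hk
        rw [alpha, Nat.add_sub_cancel, pow_succ _ (q + 1), pow_succ]
        field_simp
        ring

lemma tsum_alpha_rpow_le (hk : 1 ≤ k) (hr : 1 ≤ r) (hr' : r ≤ 1 + 1 / 3 ^ (k + 1)) :
    ∑' i : ℕ, ENNReal.ofReal ((alpha k ^ r) ^ (i + 1) * (1 / 3) ^ (k + i)) ≤
      ENNReal.ofReal (11 / 7) := by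
  set N : ℝ := 3 ^ (k - 1)
  set t : ℝ := alpha k ^ r / 3 with ht
  have hpow : (3 : ℝ) ^ k = N * 3 := (pow_sub_one_mul (by omega) 3).symm
  have hN_one : 1 ≤ N := one_le_pow₀ (by norm_num)
  have ht_nonneg : 0 ≤ t := div_nonneg (Real.rpow_nonneg (alpha_nonneg k) r) (by norm_num)
  have ht_le : t ≤ 1 - 7 / (9 * (N + 1)) := alpha_rpow_div_three_le hk hr hr'
  have hgap : 0 < 7 / (9 * (N + 1)) := by positivity
  have hterm (i : ℕ) : (alpha k ^ r) ^ (i + 1) * (1 / 3) ^ (k + i) = t / N * t ^ i := by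
    rw [ht, one_div_pow, pow_add _ k i, hpow, div_pow]
    ring
  have hsum := (hasSum_geometric_of_lt_one ht_nonneg (by linarith)).mul_left (t / N)
  simp only [hterm]
  rw [← ENNReal.ofReal_tsum_of_nonneg (fun i => by positivity) hsum.summable, hsum.tsum_eq]
  refine ENNReal.ofReal_le_ofReal ?_
  have ht_ne : 1 - t ≠ 0 := (hgap.trans_le (by linarith)).ne'
  calc t / N * (1 - t)⁻¹
      = ((1 - t)⁻¹ - 1) / N := by
        field_simp
        ring
    _ ≤ ((7 / (9 * (N + 1)))⁻¹ - 1) / N := by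
        gcongr
        linarith
    _ = 9 / 7 + 2 / (7 * N) := by
        field_simp
        ring
    _ ≤ 9 / 7 + 2 / (7 * 1) := by gcongr
    _ = 11 / 7 := by norm_num

end Series

section Averages

variable {k l : ℕ} {P : ℝ × ℝ → ℝ × ℝ} {I : ℝ × ℝ} {r a b : ℝ}

lemma lintegral_wk_rpow_of_subset_ivl (hk : 1 ≤ k) (hP : GoodP k P)
    (hI : I ∈ Ifam k P (l + 1)) (hab : Ioo a b ⊆ ivl I) :
    ∫⁻ y in Ioo a b, ENNReal.ofReal (wk k P y ^ r) =
      ENNReal.ofReal ((alpha k ^ (l + 1)) ^ r) * ENNReal.ofReal (b - a) := by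
  have hconst : ∀ y ∈ Ioo a b, wk k P y = alpha k ^ (l + 1) :=
    fun y hy => wk_of_mem_Omega hk hP (mem_biUnion hI (hab hy))
  rw [setLIntegral_congr_fun measurableSet_Ioo fun y hy => by rw [hconst y hy],
    setLIntegral_const, Real.volume_Ioo]

lemma lintegral_wk_rpow_le_tsum (hk : 1 ≤ k) (hP : GoodP k P) (hr : 0 ≤ r) (l : ℕ) (a b : ℝ) :
    ∫⁻ y in Ioo a b, ENNReal.ofReal (wk k P y ^ r) ≤
      ENNReal.ofReal ((alpha k ^ r) ^ l) * ENNReal.ofReal (b - a) +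
        ∑' i : ℕ, ENNReal.ofReal ((alpha k ^ r) ^ (l + i + 1)) *
          volume (Omega k P (l + i + 1) ∩ Ioo a b) := by
  have hmeas (i : ℕ) : MeasurableSet (Omega k P (l + i + 1)) := measurableSet_Omega k P _
  refine (lintegral_mono fun y => ofReal_wk_rpow_le hk hP hr l y).trans_eq ?_
  rw [lintegral_add_left measurable_const, setLIntegral_const, Real.volume_Ioo,
    lintegral_tsum fun i => (measurable_const.indicator (hmeas i)).aemeasurable]
  simp only [lintegral_indicator_const (hmeas _), Measure.restrict_apply (hmeas _)]

lemma tsum_volume_Omega_inter_Ioo_le (hk : 1 ≤ k) (hP : GoodP k P) (hr : 1 ≤ r)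
    (hr' : r ≤ 1 + 1 / 3 ^ (k + 1)) (l : ℕ) (a b : ℝ) :
    ∑' i : ℕ, ENNReal.ofReal ((alpha k ^ r) ^ (l + i + 1)) *
        volume (Omega k P (l + i + 1) ∩ Ioo a b) ≤
      ENNReal.ofReal ((alpha k ^ r) ^ l) * ENNReal.ofReal (b - a + 2 * (3 ^ (k * l))⁻¹) *
        ENNReal.ofReal (11 / 7) := by
  have hB : 0 ≤ alpha k ^ r := Real.rpow_nonneg (alpha_nonneg k) r
  set c := ENNReal.ofReal ((alpha k ^ r) ^ l) * ENNReal.ofReal (b - a + 2 * (3 ^ (k * l))⁻¹)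
    with hc
  have hterm (i : ℕ) : ENNReal.ofReal ((alpha k ^ r) ^ (l + i + 1)) *
      volume (Omega k P (l + i + 1) ∩ Ioo a b) ≤
        c * ENNReal.ofReal ((alpha k ^ r) ^ (i + 1) * (1 / 3) ^ (k + i)) := by
    refine (mul_le_mul_right (volume_Omega_inter_Ioo_le hk hP l i a b) _).trans_eq ?_
    rw [hc, add_assoc, pow_add, ENNReal.ofReal_mul (by positivity),
      ENNReal.ofReal_mul (by positivity)]
    ring
  calc _ ≤ ∑' i : ℕ, c * ENNReal.ofReal ((alpha k ^ r) ^ (i + 1) * (1 / 3) ^ (k + i)) :=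
        ENNReal.tsum_le_tsum hterm
    _ ≤ c * ENNReal.ofReal (11 / 7) := by
        rw [ENNReal.tsum_mul_left]
        gcongr
        exact tsum_alpha_rpow_le hk hr hr'

lemma lintegral_wk_rpow_le_of_len_le (hk : 1 ≤ k) (hP : GoodP k P) (hr : 1 ≤ r)
    (hr' : r ≤ 1 + 1 / 3 ^ (k + 1)) (hab : (3 ^ (k * l))⁻¹ ≤ 3 * (b - a)) :
    ∫⁻ y in Ioo a b, ENNReal.ofReal (wk k P y ^ r) ≤
      ENNReal.ofReal (12 * (alpha k ^ l) ^ r * (b - a)) := by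
  have hB : 0 ≤ alpha k ^ r := Real.rpow_nonneg (alpha_nonneg k) r
  have hlen : 0 < (3 ^ (k * l) : ℝ)⁻¹ := by positivity
  have hba : 0 ≤ b - a := by linarith
  rw [← Real.rpow_pow_comm (alpha_nonneg k)]
  calc _ ≤ ENNReal.ofReal ((alpha k ^ r) ^ l) * ENNReal.ofReal (b - a) +
        ENNReal.ofReal ((alpha k ^ r) ^ l) * ENNReal.ofReal (b - a + 2 * (3 ^ (k * l))⁻¹) *
          ENNReal.ofReal (11 / 7) :=
        (lintegral_wk_rpow_le_tsum hk hP (by linarith) l a b).trans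
          (add_le_add_right (tsum_volume_Omega_inter_Ioo_le hk hP hr hr' l a b) _)
    _ ≤ ENNReal.ofReal ((alpha k ^ r) ^ l) * ENNReal.ofReal (b - a) +
        ENNReal.ofReal ((alpha k ^ r) ^ l) * ENNReal.ofReal (7 * (b - a)) *
          ENNReal.ofReal (11 / 7) := by
        gcongr
        linarith
    _ = ENNReal.ofReal (12 * (alpha k ^ r) ^ l * (b - a)) := by
        rw [← ENNReal.ofReal_mul (by positivity), ← ENNReal.ofReal_mul (by positivity),
          ← ENNReal.ofReal_mul (by positivity), ← ENNReal.ofReal_add (by positivity)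
          (by positivity)]
        ring_nf

end Averages

theorem statement3_general {k : ℕ} (hk : 1 ≤ k) {P : ℝ × ℝ → ℝ × ℝ} (hP : GoodP k P)
    {r : ℝ} (hr : 1 ≤ r) (hr' : r ≤ 1 + 1 / 3 ^ (k + 1)) {l : ℕ} {I : ℝ × ℝ}
    (hI : I ∈ Ifam k P l) {x : ℝ} (hx : x ∈ ivl (mid I)) :
    Mr r (wk k P) x ≤ ENNReal.ofReal (12 * wk k P x) := by
  obtain ⟨J, hJ, rfl⟩ := id hI
  obtain _ | l := l
  · exact hJ.elim
  have hlen : len (P J) = (3 ^ (k * (l + 1)))⁻¹ := by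
    rw [hP.len_eq hJ, len_of_mem_Jfam hJ, mul_add_one, pow_add, mul_inv, div_eq_mul_inv]
  have hα : 0 ≤ alpha k := alpha_nonneg k
  rw [wk_of_mem_Omega hk hP (mem_biUnion hI (ivl_mid_subset _ hx))]
  refine Mr_le_of_lintegral_le hr (by norm_num) (by positivity) fun a b hab hxab => ?_
  simp only [abs_of_nonneg (wk_nonneg k P _)]
  rcases le_or_gt (len (P J) / 3) (b - a) with hlong | hshort
  · exact lintegral_wk_rpow_le_of_len_le hk hP hr hr' (by linarith)
  · rw [lintegral_wk_rpow_of_subset_ivl hk hP hI (Ioo_subset_ivl_of_mem_mid hx hxab hshort),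
      ← ENNReal.ofReal_mul (by positivity)]
    gcongr
    exact le_mul_of_one_le_left (by positivity) (by norm_num)

/-- **Lemma 2.2.** With `r = 1 + 1/3^{k+1}`, for every `l ≥ 1`,
`I ∈ ℐ_l` and `x ∈ I^Δ` one has `M_r w_k(x) ≤ 21 w_k(x)`. -/
theorem statement3 (k : ℕ) (hk : 2 ≤ k) (P : ℝ × ℝ → ℝ × ℝ) (hP : GoodP k P)
    (r : ℝ) (hr : r = 1 + 1 / (3:ℝ) ^ (k + 1)) :
    ∀ l : ℕ, 1 ≤ l → ∀ I ∈ Ifam k P l, ∀ x ∈ ivl (mid I),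
      Mr r (wk k P) x ≤ ENNReal.ofReal (21 * wk k P x) := fun _ _ _ hI x hx =>
  (statement3_general (by omega) hP (hr ▸ le_add_of_nonneg_right (by positivity)) hr.le hI hx).trans
    (ENNReal.ofReal_le_ofReal (mul_le_mul_of_nonneg_right (by norm_num) (wk_nonneg k P x)))

end RT

end
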